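/- Let (X_i)_{i≥1} be i.i.d. standard normal and X_{(n)} = max_{1≤i≤n} X_i. Let b_n > 0 satisfy 2π b_n² exp(b_n²) = n² and set Y_n = b_n(X_{(n)} - b_n). Then, as n → ∞, the total variation distance satisfies ‖L(Y_n) - Λ‖_TV = (d₃/(4 log n))(1 + o(1)), where d₃ = ∫_ℝ e^{-x - e^{-x}} |−x² + e^{-x}(x² + 2x + 2)| dx. -/

import Mathlib

open MeasureTheory Filter Real

/-- The standard normal cumulative distribution function. -/
noncomputable def stdNormalCDF (x : ℝ) : ℝ :=
  ∫ t in Set.Iic x, Real.exp (-t ^ 2 / 2) / Real.sqrt (2 * Real.pi)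

/-- The standard normal density. -/
noncomputable def stdNormalPDF (x : ℝ) : ℝ :=
  Real.exp (-x ^ 2 / 2) / Real.sqrt (2 * Real.pi)

/-- Scaling constant `a_n = √(2 log n)`. -/
noncomputable def aSeq (n : ℕ) : ℝ := Real.sqrt (2 * Real.log n)

/-- Centering constant
`b_n = √(2 log n) - (log log n + log (4π)) / (2 √(2 log n))`. -/
noncomputable def bSeq (n : ℕ) : ℝ :=
  aSeq n - (Real.log (Real.log n) + Real.log (4 * Real.pi)) / (2 * aSeq n)

/-- `c_n = log (√(4 π log n))`. -/
noncomputable def cSeq (n : ℕ) : ℝ := Real.log (Real.sqrt (4 * Real.pi * Real.log n))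

/-- The CDF of `Y_n = a_n (X_{(n)} - b_n)` where `X_{(n)}` is the maximum of `n`
i.i.d. standard normal random variables: `P(Y_n ≤ x) = Φ(b_n + x/a_n)^n`. -/
noncomputable def Fmax (n : ℕ) (x : ℝ) : ℝ := stdNormalCDF (bSeq n + x / aSeq n) ^ n

/-- The density of `Y_n = a_n (X_{(n)} - b_n)`:
`f_n(x) = n a_n⁻¹ φ(b_n + x/a_n) Φ(b_n + x/a_n)^{n-1}`. -/
noncomputable def fmax (n : ℕ) (x : ℝ) : ℝ :=
  n * (aSeq n)⁻¹ * stdNormalPDF (bSeq n + x / aSeq n) *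
    stdNormalCDF (bSeq n + x / aSeq n) ^ (n - 1)

/-- The density of the standard Gumbel distribution. -/
noncomputable def gumbelPDF (x : ℝ) : ℝ := Real.exp (-x - Real.exp (-x))

/-!
Put `β = b_n ^ 2`. The equation for `b_n` says `n φ(b_n) = b_n`, so in the variable
`x = b_n (y - b_n)` the density of the maximum is `P (1 - T / n) ^ (n - 1)` with
`P = exp (-x - x ^ 2 / (2 β))` and `T = ∫_x^∞ P`, while the Gumbel density is
`exp (-x) exp (-exp (-x))`. As `β → ∞`, `β (exp (-x) - P) → exp (-x) x ^ 2 / 2` and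
`β (exp (-x) - T) → exp (-x) (x ^ 2 + 2 x + 2) / 2`, whereas replacing `(1 - T / n) ^ (n - 1)` by
`exp (-T)` costs only `O(1 / n) = o(1 / β)`. Hence `β` times the difference of the densities
converges pointwise to half the integrand of `d₃` without its absolute value.

The convergence is dominated by a multiple of `exp (-|x| / 2)`: for `x ≤ 0` the factor `exp (-T)`
must beat powers of `exp (-x)`, which works while `-x ≤ 4 β` because then `T` is at least quadratic
in `x`; for `-x ≥ 4 β` the bound `P` on the density of the maximum is itself at most `exp x`. So
`β` times the distance tends to `d₃ / 2`, and `β ~ 2 log n`.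
-/

section

open Set Topology

variable {ι : Type*} {l : Filter ι}

lemma tendsto_of_tendsto_mul_sub {a v : ℝ} {c u : ι → ℝ} (hc : Tendsto c l atTop)
    (hu : Tendsto (fun i ↦ c i * (u i - a)) l (𝓝 v)) : Tendsto u l (𝓝 a) := by
  rw [← tendsto_sub_nhds_zero_iff, ← mul_zero v]
  refine (hu.mul (tendsto_inv_atTop_zero.comp hc)).congr' ?_
  filter_upwards [hc.eventually_ne_atTop 0] with i hi
  simp [field]

lemma tendsto_mul_sub_of_hasDerivAt {f : ℝ → ℝ} {f' a v : ℝ} {c u : ι → ℝ}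
    (hf : HasDerivAt f f' a) (hc : Tendsto c l atTop)
    (hu : Tendsto (fun i ↦ c i * (u i - a)) l (𝓝 v)) :
    Tendsto (fun i ↦ c i * (f (u i) - f a)) l (𝓝 (v * f')) := by
  have hd : Tendsto (fun i ↦ u i - a) l (𝓝 0) :=
    tendsto_sub_nhds_zero_iff.2 (tendsto_of_tendsto_mul_sub hc hu)
  simpa using (hf.hasFDerivAt.hasFDerivWithinAt (s := univ)).lim hd (by simp) hu

lemma integrable_exp_neg_mul_abs {c : ℝ} (hc : 0 < c) :
    Integrable fun x : ℝ ↦ exp (-c * |x|) := by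
  refine not_imp_comm.1 integral_undef ?_
  rw [integral_comp_abs (f := fun x ↦ exp (-c * x)), integral_exp_mul_Ioi (neg_lt_zero.2 hc)]
  simp [hc.ne']

section ExpTail

lemma hasDerivAt_neg_exp_neg_mul_quadratic (y : ℝ) :
    HasDerivAt (fun y ↦ -(exp (-y) * (y ^ 2 + 2 * y + 2))) (exp (-y) * y ^ 2) y := by
  have hexp : HasDerivAt (fun y ↦ exp (-y)) (-exp (-y)) y := by
    simpa using (hasDerivAt_neg y).exp
  have hquad : HasDerivAt (fun y : ℝ ↦ y ^ 2 + 2 * y + 2) (2 * y + 2) y := by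
    simpa using ((hasDerivAt_pow 2 y).add ((hasDerivAt_id y).const_mul 2)).add_const 2
  exact (hexp.mul hquad).neg.congr_deriv (by ring)

lemma tendsto_neg_exp_neg_mul_quadratic :
    Tendsto (fun y ↦ -(exp (-y) * (y ^ 2 + 2 * y + 2))) atTop (𝓝 0) := by
  have h := (((tendsto_pow_mul_exp_neg_atTop_nhds_zero 2).add
    ((tendsto_pow_mul_exp_neg_atTop_nhds_zero 1).const_mul 2)).add
    ((tendsto_pow_mul_exp_neg_atTop_nhds_zero 0).const_mul 2)).neg
  simp only [mul_zero, add_zero, neg_zero] at h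
  exact h.congr fun y ↦ by ring

lemma integrableOn_Ioi_exp_neg_mul_sq (x : ℝ) :
    IntegrableOn (fun y ↦ exp (-y) * y ^ 2) (Ioi x) :=
  integrableOn_Ioi_deriv_of_nonneg' (fun y _ ↦ hasDerivAt_neg_exp_neg_mul_quadratic y)
    (fun y _ ↦ by positivity) tendsto_neg_exp_neg_mul_quadratic

lemma integral_Ioi_exp_neg_mul_sq (x : ℝ) :
    ∫ y in Ioi x, exp (-y) * y ^ 2 = exp (-x) * (x ^ 2 + 2 * x + 2) := by
  rw [integral_Ioi_of_hasDerivAt_of_tendsto'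
    (fun y _ ↦ hasDerivAt_neg_exp_neg_mul_quadratic y) (integrableOn_Ioi_exp_neg_mul_sq x)
    tendsto_neg_exp_neg_mul_quadratic]
  ring

end ExpTail

/-- The density `φ(b + x / b) / φ(b)` of a standard normal variable rescaled around a level `b`,
relative to its value at `x = 0`, written in terms of `β = b ^ 2`. -/
noncomputable def scaledPDF (β x : ℝ) : ℝ := exp (-x - x ^ 2 / (2 * β))

/-- The tail integral of `scaledPDF β`. For `β = b ^ 2` and `n φ(b) = b` it is
`n (1 - Φ(b + x / b))`, the expected number of exceedances of `b + x / b` among `n` standard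
normal variables. -/
noncomputable def scaledTail (β x : ℝ) : ℝ := ∫ y in Ioi x, scaledPDF β y

/-- The density of `b (X - b)` for `X` the maximum of `n` standard normal variables, when
`n φ(b) = b` and `β = b ^ 2`. -/
noncomputable def scaledMaxPDF (β : ℝ) (n : ℕ) (x : ℝ) : ℝ :=
  scaledPDF β x * (1 - scaledTail β x / n) ^ (n - 1)

section Normal

lemma stdNormalPDF_eq_gaussianPDFReal :
    stdNormalPDF = ProbabilityTheory.gaussianPDFReal 0 1 := by
  ext x
  simp [stdNormalPDF, ProbabilityTheory.gaussianPDFReal, div_eq_inv_mul]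

lemma stdNormalPDF_pos (x : ℝ) : 0 < stdNormalPDF x := by
  unfold stdNormalPDF; positivity

lemma stdNormalCDF_nonneg (x : ℝ) : 0 ≤ stdNormalCDF x := by
  unfold stdNormalCDF; positivity

lemma stdNormalCDF_eq_one_sub (x : ℝ) :
    stdNormalCDF x = 1 - ∫ t in Ioi x, stdNormalPDF t := by
  have hint : Integrable stdNormalPDF :=
    stdNormalPDF_eq_gaussianPDFReal ▸ ProbabilityTheory.integrable_gaussianPDFReal 0 1
  have htotal : ∫ t, stdNormalPDF t = 1 :=
    stdNormalPDF_eq_gaussianPDFReal ▸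
      ProbabilityTheory.integral_gaussianPDFReal_eq_one 0 one_ne_zero
  rw [← htotal, eq_sub_iff_add_eq]
  exact intervalIntegral.integral_Iic_add_Ioi hint.integrableOn hint.integrableOn

variable {b : ℝ}

lemma stdNormalPDF_add_div (hb : b ≠ 0) (x : ℝ) :
    stdNormalPDF (b + x / b) = stdNormalPDF b * scaledPDF (b ^ 2) x := by
  rw [stdNormalPDF, stdNormalPDF, scaledPDF, div_mul_eq_mul_div, ← exp_add]
  congr 2
  field_simp
  ring

lemma integral_Ioi_stdNormalPDF (hb : 0 < b) (x : ℝ) :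
    ∫ t in Ioi (b + x / b), stdNormalPDF t = stdNormalPDF b / b * scaledTail (b ^ 2) x := by
  have hshift : ∫ t in Ioi (x / b), stdNormalPDF (b + t) =
      ∫ t in Ioi (b + x / b), stdNormalPDF t := by
    rw [← (measurePreserving_add_left volume b).setIntegral_preimage_emb
      (measurableEmbedding_addLeft b) stdNormalPDF]
    simp
  have hscale := integral_comp_mul_right_Ioi (fun t ↦ stdNormalPDF (b + t)) x (inv_pos.2 hb)
  simp only [← div_eq_mul_inv, inv_inv, smul_eq_mul, hshift, stdNormalPDF_add_div hb.ne',
    integral_const_mul] at hscale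
  rw [scaledTail, div_mul_eq_mul_div, hscale]
  field_simp

lemma stdNormalCDF_add_div (hb : 0 < b) (x : ℝ) :
    stdNormalCDF (b + x / b) = 1 - stdNormalPDF b / b * scaledTail (b ^ 2) x := by
  rw [stdNormalCDF_eq_one_sub, integral_Ioi_stdNormalPDF hb]

lemma mul_stdNormalPDF_eq {n : ℝ} (hb : 0 < b) (hn : 0 ≤ n)
    (h : 2 * π * b ^ 2 * exp (b ^ 2) = n ^ 2) : n * stdNormalPDF b = b := by
  refine (pow_left_inj₀ (mul_nonneg hn (stdNormalPDF_pos b).le) hb.le two_ne_zero).1 ?_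
  have hexp : exp (-b ^ 2 / 2) ^ 2 = (exp (b ^ 2))⁻¹ := by
    rw [← exp_nat_mul, ← exp_neg]
    congr 1
    push_cast
    ring
  rw [mul_pow, ← h, stdNormalPDF, div_pow, sq_sqrt (by positivity), hexp]
  field_simp

variable {n : ℕ}

lemma scaledTail_sq_le (hb : 0 < b) (hnb : n * stdNormalPDF b = b) (x : ℝ) :
    scaledTail (b ^ 2) x ≤ n := by
  have h := stdNormalCDF_nonneg (b + x / b)
  rw [stdNormalCDF_add_div hb, sub_nonneg, div_mul_eq_mul_div, div_le_one hb] at h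
  refine le_of_mul_le_mul_left ?_ (stdNormalPDF_pos b)
  linarith

lemma mul_stdNormalPDF_mul_stdNormalCDF_pow (hb : 0 < b) (hnb : n * stdNormalPDF b = b)
    (x : ℝ) :
    n * b⁻¹ * stdNormalPDF (b + x / b) * stdNormalCDF (b + x / b) ^ (n - 1) =
      scaledMaxPDF (b ^ 2) n x := by
  have hn : (n : ℝ) ≠ 0 := left_ne_zero_of_mul (hnb.trans_ne hb.ne')
  have hφ : stdNormalPDF b = b / n := (eq_div_iff hn).2 (by rwa [mul_comm])
  rw [stdNormalPDF_add_div hb.ne', stdNormalCDF_add_div hb, scaledMaxPDF, hφ]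
  field_simp

end Normal

section ScaledTail

variable {β x : ℝ}

lemma scaledPDF_pos (β x : ℝ) : 0 < scaledPDF β x := exp_pos _

lemma continuous_scaledPDF (β : ℝ) : Continuous (scaledPDF β) := by
  unfold scaledPDF; fun_prop

lemma scaledPDF_le_exp_neg (hβ : 0 ≤ β) (x : ℝ) : scaledPDF β x ≤ exp (-x) := by
  rw [scaledPDF, exp_le_exp]
  exact sub_le_self _ (by positivity)

lemma mul_exp_neg_sub_scaledPDF_le (hβ : 0 < β) (x : ℝ) :
    β * (exp (-x) - scaledPDF β x) ≤ exp (-x) * x ^ 2 / 2 := by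
  have hexp : 1 - exp (-(x ^ 2 / (2 * β))) ≤ x ^ 2 / (2 * β) := by
    linarith [one_sub_le_exp_neg (x ^ 2 / (2 * β))]
  calc β * (exp (-x) - scaledPDF β x)
      = β * (exp (-x) * (1 - exp (-(x ^ 2 / (2 * β))))) := by
        rw [scaledPDF, sub_eq_add_neg (-x), exp_add]; ring
    _ ≤ β * (exp (-x) * (x ^ 2 / (2 * β))) := by gcongr
    _ = exp (-x) * x ^ 2 / 2 := by field_simp

lemma integrableOn_Ioi_exp_neg (x : ℝ) : IntegrableOn (fun y : ℝ ↦ exp (-y)) (Ioi x) := by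
  simpa using exp_neg_integrableOn_Ioi x one_pos

lemma integrableOn_Ioi_scaledPDF (hβ : 0 ≤ β) (x : ℝ) : IntegrableOn (scaledPDF β) (Ioi x) :=
  (integrableOn_Ioi_exp_neg x).mono' (continuous_scaledPDF β).aestronglyMeasurable <|
    .of_forall fun y ↦ by
      rw [norm_of_nonneg (scaledPDF_pos β y).le]
      exact scaledPDF_le_exp_neg hβ y

lemma scaledTail_nonneg (β x : ℝ) : 0 ≤ scaledTail β x :=
  integral_nonneg fun y ↦ (scaledPDF_pos β y).le

lemma scaledTail_le_exp_neg (hβ : 0 ≤ β) (x : ℝ) : scaledTail β x ≤ exp (-x) := by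
  rw [← integral_exp_neg_Ioi x]
  exact integral_mono (integrableOn_Ioi_scaledPDF hβ x) (integrableOn_Ioi_exp_neg x)
    (scaledPDF_le_exp_neg hβ)

lemma antitone_scaledTail (hβ : 0 ≤ β) : Antitone (scaledTail β) := fun x _ hxy ↦
  setIntegral_mono_set (integrableOn_Ioi_scaledPDF hβ x)
    (.of_forall fun z ↦ (scaledPDF_pos β z).le) (Ioi_subset_Ioi hxy).eventuallyLE

lemma mul_exp_neg_sub_scaledTail (hβ : 0 ≤ β) (x : ℝ) :
    β * (exp (-x) - scaledTail β x) = ∫ y in Ioi x, β * (exp (-y) - scaledPDF β y) := by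
  rw [integral_const_mul, integral_sub (integrableOn_Ioi_exp_neg x)
    (integrableOn_Ioi_scaledPDF hβ x), integral_exp_neg_Ioi, scaledTail]

lemma mul_exp_neg_sub_scaledTail_le (hβ : 0 < β) (x : ℝ) :
    β * (exp (-x) - scaledTail β x) ≤ exp (-x) * (x ^ 2 + 2 * x + 2) / 2 := by
  rw [mul_exp_neg_sub_scaledTail hβ.le, ← integral_Ioi_exp_neg_mul_sq, ← integral_div]
  exact integral_mono (((integrableOn_Ioi_exp_neg x).sub
    (integrableOn_Ioi_scaledPDF hβ.le x)).const_mul β)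
    ((integrableOn_Ioi_exp_neg_mul_sq x).div_const 2) (mul_exp_neg_sub_scaledPDF_le hβ)

lemma quadratic_le_scaledTail (hβ : 0 < β) (hx : x ≤ 0) (hxβ : -4 * β ≤ x) :
    -x / 4 + x ^ 2 / 64 ≤ scaledTail β x := by
  have hlin : ∀ y ∈ Ioc (x / 4) 0, 1 - y / 2 ≤ scaledPDF β y := fun y hy ↦ by
    have hsq : y ^ 2 / (2 * β) ≤ -y / 2 := by
      rw [div_le_iff₀ (by positivity)]
      nlinarith [hy.1, hy.2]
    calc 1 - y / 2 ≤ -y - y ^ 2 / (2 * β) + 1 := by linarith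
      _ ≤ scaledPDF β y := add_one_le_exp _
  calc -x / 4 + x ^ 2 / 64 = ∫ y in Ioc (x / 4) 0, (1 - y / 2) := by
        rw [← intervalIntegral.integral_of_le (by linarith),
          intervalIntegral.integral_sub (by simp) (Continuous.intervalIntegrable (by fun_prop) _ _)]
        simp
        ring
    _ ≤ ∫ y in Ioc (x / 4) 0, scaledPDF β y :=
        setIntegral_mono_on (Continuous.integrableOn_Ioc (by fun_prop))
          (continuous_scaledPDF β).integrableOn_Ioc measurableSet_Ioc hlin
    _ ≤ scaledTail β (x / 4) :=
        setIntegral_mono_set (integrableOn_Ioi_scaledPDF hβ.le _)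
          (.of_forall fun y ↦ (scaledPDF_pos β y).le) Ioc_subset_Ioi_self.eventuallyLE
    _ ≤ scaledTail β x := antitone_scaledTail hβ.le (by linarith)

end ScaledTail

section ScaledTailLimit

variable {β : ι → ℝ}

lemma tendsto_mul_exp_neg_sub_scaledPDF (hβ : Tendsto β l atTop) (x : ℝ) :
    Tendsto (fun i ↦ β i * (exp (-x) - scaledPDF (β i) x)) l (𝓝 (exp (-x) * x ^ 2 / 2)) := by
  have hexponent : Tendsto (fun i ↦ β i * (-x - x ^ 2 / (2 * β i) - -x)) l (𝓝 (-(x ^ 2 / 2))) := by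
    refine tendsto_const_nhds.congr' ?_
    filter_upwards [hβ.eventually_ne_atTop 0] with i hi
    field_simp
    ring
  convert (tendsto_mul_sub_of_hasDerivAt (hasDerivAt_exp (-x)) hβ hexponent).neg using 2
  · rw [scaledPDF]; ring
  · ring

lemma tendsto_mul_exp_neg_sub_scaledTail [l.IsCountablyGenerated] (hβ : Tendsto β l atTop)
    (x : ℝ) :
    Tendsto (fun i ↦ β i * (exp (-x) - scaledTail (β i) x)) l
      (𝓝 (exp (-x) * (x ^ 2 + 2 * x + 2) / 2)) := by
  have hint : Tendsto (fun i ↦ ∫ y in Ioi x, β i * (exp (-y) - scaledPDF (β i) y)) l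
      (𝓝 (∫ y in Ioi x, exp (-y) * y ^ 2 / 2)) := by
    refine tendsto_integral_filter_of_dominated_convergence (fun y ↦ exp (-y) * y ^ 2 / 2)
      (.of_forall fun i ↦ ?_) ?_ ((integrableOn_Ioi_exp_neg_mul_sq x).div_const 2)
      (.of_forall (tendsto_mul_exp_neg_sub_scaledPDF hβ))
    · have := continuous_scaledPDF (β i)
      exact Continuous.aestronglyMeasurable (by fun_prop)
    · filter_upwards [hβ.eventually_gt_atTop 0] with i hi
      refine .of_forall fun y ↦ ?_
      rw [norm_of_nonneg (mul_nonneg hi.le (sub_nonneg.2 (scaledPDF_le_exp_neg hi.le y)))]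
      exact mul_exp_neg_sub_scaledPDF_le hi y
  rw [integral_div, integral_Ioi_exp_neg_mul_sq] at hint
  refine hint.congr' ?_
  filter_upwards [hβ.eventually_ge_atTop 0] with i hi using (mul_exp_neg_sub_scaledTail hi x).symm

end ScaledTailLimit

section PowBounds

lemma exp_sub_one_le_three_mul {p : ℝ} (hp0 : 0 ≤ p) (hp1 : p ≤ 1) : exp p - 1 ≤ 3 * p := by
  have hthree : exp p ≤ 3 := (exp_le_exp.2 hp1).trans exp_one_lt_three.le
  calc exp p - 1 = exp p * (1 - exp (-p)) := by rw [mul_sub, ← exp_add]; simp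
    _ ≤ exp p * p := by gcongr; linarith [one_sub_le_exp_neg p]
    _ ≤ 3 * p := by gcongr

variable {n : ℕ} {t : ℝ}

lemma one_sub_div_pow_pred_le (hn : 1 ≤ n) (ht : t ≤ n) :
    (1 - t / n) ^ (n - 1) ≤ exp (-t) * exp (t / n) := by
  have hbase : 0 ≤ 1 - t / n := sub_nonneg.2 (div_le_one_of_le₀ ht n.cast_nonneg)
  calc (1 - t / n) ^ (n - 1) ≤ exp (-(t / n)) ^ (n - 1) := by
        gcongr
        exact one_sub_le_exp_neg _
    _ = exp (-t) * exp (t / n) := by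
        rw [← exp_nat_mul, ← exp_add, Nat.cast_sub hn]
        congr 1
        push_cast
        field_simp
        ring

lemma exp_neg_mul_one_sub_le_one_sub_div_pow (ht : |t| ≤ n) :
    exp (-t) * (1 - t ^ 2 / n) ≤ (1 - t / n) ^ n := by
  obtain rfl | hn := eq_or_ne n 0
  · simp_all
  set p := t / n with hp
  have hpt : n * p = t := by rw [hp]; field_simp
  have hp1 : |p| ≤ 1 := by
    rw [hp, abs_div, Nat.abs_cast]
    exact div_le_one_of_le₀ ht n.cast_nonneg
  have hsq : p ^ 2 ≤ 1 := (sq_le_one_iff_abs_le_one p).2 hp1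
  have hbase : exp (-p) * (1 - p ^ 2) ≤ 1 - p := by
    rw [exp_neg, inv_mul_le_iff₀ (exp_pos p)]
    nlinarith [add_one_le_exp p, (abs_le.1 hp1).2]
  calc exp (-t) * (1 - t ^ 2 / n) = exp (-p) ^ n * (1 + n * -p ^ 2) := by
        rw [← exp_nat_mul, ← hpt]
        field_simp
        ring_nf
    _ ≤ exp (-p) ^ n * (1 + -p ^ 2) ^ n := by
        gcongr
        exact one_add_mul_le_pow (by linarith) n
    _ = (exp (-p) * (1 - p ^ 2)) ^ n := by rw [mul_pow, sub_eq_add_neg]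
    _ ≤ (1 - p) ^ n := by
        gcongr

lemma one_sub_div_pow_pred_nonneg (ht : t ≤ n) : 0 ≤ (1 - t / n) ^ (n - 1) :=
  pow_nonneg (sub_nonneg.2 (div_le_one_of_le₀ ht n.cast_nonneg)) _

lemma one_sub_div_pow_pred_le_three_mul (hn : 1 ≤ n) (ht : t ≤ n) :
    (1 - t / n) ^ (n - 1) ≤ 3 * exp (-t) := by
  have hexp : exp (t / n) ≤ 3 :=
    (exp_le_exp.2 (div_le_one_of_le₀ ht n.cast_nonneg)).trans exp_one_lt_three.le
  calc (1 - t / n) ^ (n - 1) ≤ exp (-t) * exp (t / n) := one_sub_div_pow_pred_le hn ht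
    _ ≤ exp (-t) * 3 := by gcongr
    _ = 3 * exp (-t) := mul_comm _ _

lemma abs_one_sub_div_pow_pred_sub_exp_neg_le (hn : 1 ≤ n) (ht0 : 0 ≤ t) (ht : t ≤ n) :
    |(1 - t / n) ^ (n - 1) - exp (-t)| ≤ exp (-t) * (3 * t + t ^ 2) / n := by
  have hp0 : 0 ≤ t / n := by positivity
  have hp1 : t / n ≤ 1 := div_le_one_of_le₀ ht n.cast_nonneg
  have hexp := exp_sub_one_le_three_mul hp0 hp1
  have hupper := one_sub_div_pow_pred_le hn ht
  have hlower : exp (-t) * (1 - t ^ 2 / n) ≤ (1 - t / n) ^ (n - 1) :=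
    (exp_neg_mul_one_sub_le_one_sub_div_pow ((abs_of_nonneg ht0).trans_le ht)).trans
      (pow_le_pow_of_le_one (by linarith) (by linarith) (Nat.sub_le n 1))
  have hsplit : exp (-t) * (3 * t + t ^ 2) / n =
      exp (-t) * (3 * (t / n)) + exp (-t) * (t ^ 2 / n) := by ring
  have hlin : 0 ≤ exp (-t) * (3 * (t / n)) := by positivity
  have hquad : 0 ≤ exp (-t) * (t ^ 2 / n) := by positivity
  rw [hsplit, abs_le]
  constructor
  · linarith
  · linarith [mul_le_mul_of_nonneg_left hexp (exp_pos (-t)).le]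

end PowBounds

/-- The first-order correction to the Gumbel density, up to the factor `gumbelPDF x / 2`: the
density of the rescaled maximum is `gumbelPDF x * (1 + gumbelCorrection x / (2 * b ^ 2) + ⋯)`. -/
noncomputable def gumbelCorrection (x : ℝ) : ℝ :=
  -x ^ 2 + exp (-x) * (x ^ 2 + 2 * x + 2)

section PointwiseLimit

lemma gumbelPDF_pos (x : ℝ) : 0 < gumbelPDF x := exp_pos _

lemma gumbelPDF_eq_mul (x : ℝ) : gumbelPDF x = exp (-x) * exp (-exp (-x)) := by
  rw [gumbelPDF, sub_eq_add_neg, exp_add]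

lemma scaledMaxPDF_sub_gumbelPDF (β : ℝ) (n : ℕ) (x : ℝ) :
    scaledMaxPDF β n x - gumbelPDF x =
      -((exp (-x) - scaledPDF β x) * (1 - scaledTail β x / n) ^ (n - 1)) +
      exp (-x) * ((1 - scaledTail β x / n) ^ (n - 1) - exp (-scaledTail β x)) +
      exp (-x) * (exp (-scaledTail β x) - exp (-exp (-x))) := by
  rw [scaledMaxPDF, gumbelPDF_eq_mul]
  ring

variable {β : ι → ℝ} {n : ι → ℕ} {x : ℝ} [l.IsCountablyGenerated]

lemma tendsto_scaledTail (hβ : Tendsto β l atTop) (x : ℝ) :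
    Tendsto (fun i ↦ scaledTail (β i) x) l (𝓝 (exp (-x))) :=
  tendsto_of_tendsto_mul_sub hβ <|
    (tendsto_mul_exp_neg_sub_scaledTail hβ x).neg.congr fun i ↦ by ring

lemma tendsto_mul_exp_neg_scaledTail_sub (hβ : Tendsto β l atTop) (x : ℝ) :
    Tendsto (fun i ↦ β i * (exp (-scaledTail (β i) x) - exp (-exp (-x)))) l
      (𝓝 (exp (-x) * (x ^ 2 + 2 * x + 2) / 2 * exp (-exp (-x)))) := by
  refine tendsto_mul_sub_of_hasDerivAt (hasDerivAt_exp _) hβ ?_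
  exact (tendsto_mul_exp_neg_sub_scaledTail hβ x).congr fun i ↦ by ring

lemma tendsto_mul_one_sub_scaledTail_div_pow_sub (hβ : Tendsto β l atTop)
    (hβn : Tendsto (fun i ↦ β i / n i) l (𝓝 0)) (hn : ∀ᶠ i in l, 1 ≤ n i)
    (hTn : ∀ᶠ i in l, scaledTail (β i) x ≤ n i) :
    Tendsto (fun i ↦ β i *
      ((1 - scaledTail (β i) x / n i) ^ (n i - 1) - exp (-scaledTail (β i) x))) l (𝓝 0) := by
  have hT := tendsto_scaledTail hβ x
  have hbound : Tendsto (fun i ↦ exp (-scaledTail (β i) x) *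
      (3 * scaledTail (β i) x + scaledTail (β i) x ^ 2) * (β i / n i)) l (𝓝 0) := by
    simpa using (hT.neg.rexp.mul ((hT.const_mul 3).add (hT.pow 2))).mul hβn
  refine squeeze_zero_norm' ?_ hbound
  filter_upwards [hβ.eventually_ge_atTop 0, hn, hTn] with i hi hni hTi
  rw [norm_mul, norm_of_nonneg hi, norm_eq_abs]
  calc β i * |(1 - scaledTail (β i) x / n i) ^ (n i - 1) - exp (-scaledTail (β i) x)|
      ≤ β i * (exp (-scaledTail (β i) x) *
          (3 * scaledTail (β i) x + scaledTail (β i) x ^ 2) / n i) := by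
        gcongr
        exact abs_one_sub_div_pow_pred_sub_exp_neg_le hni (scaledTail_nonneg _ _) hTi
    _ = _ := by ring

lemma tendsto_mul_scaledMaxPDF_sub_gumbelPDF (hβ : Tendsto β l atTop)
    (hβn : Tendsto (fun i ↦ β i / n i) l (𝓝 0)) (hn : ∀ᶠ i in l, 1 ≤ n i)
    (hTn : ∀ᶠ i in l, scaledTail (β i) x ≤ n i) :
    Tendsto (fun i ↦ β i * (scaledMaxPDF (β i) (n i) x - gumbelPDF x)) l
      (𝓝 (gumbelPDF x * gumbelCorrection x / 2)) := by
  have hpow := tendsto_mul_one_sub_scaledTail_div_pow_sub hβ hβn hn hTn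
  have hexp := tendsto_mul_exp_neg_scaledTail_sub hβ x
  have hpow_lim : Tendsto (fun i ↦ (1 - scaledTail (β i) x / n i) ^ (n i - 1)) l
      (𝓝 (exp (-exp (-x)))) :=
    tendsto_of_tendsto_mul_sub hβ ((hpow.add hexp).congr fun i ↦ by ring)
  have hsum := (((tendsto_mul_exp_neg_sub_scaledPDF hβ x).mul hpow_lim).neg.add
    (hpow.const_mul (exp (-x)))).add (hexp.const_mul (exp (-x)))
  convert hsum using 2
  · rw [scaledMaxPDF_sub_gumbelPDF]; ring
  · rw [gumbelPDF_eq_mul, gumbelCorrection]; ring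

end PointwiseLimit

section Domination

variable {β x : ℝ} {n : ℕ}

lemma mul_exp_neg_scaledTail_sub_le (hβ : 0 < β) (x : ℝ) :
    β * (exp (-scaledTail β x) - exp (-exp (-x))) ≤
      exp (-scaledTail β x) * (exp (-x) * (x ^ 2 + 2 * x + 2) / 2) := by
  have hconv : exp (-scaledTail β x) - exp (-exp (-x)) ≤
      exp (-scaledTail β x) * (exp (-x) - scaledTail β x) := by
    have hsplit : exp (-exp (-x)) =
        exp (-scaledTail β x) * exp (-(exp (-x) - scaledTail β x)) := by
      rw [← exp_add]; ring_nf
    rw [hsplit]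
    nlinarith [one_sub_le_exp_neg (exp (-x) - scaledTail β x), exp_pos (-scaledTail β x)]
  calc β * (exp (-scaledTail β x) - exp (-exp (-x)))
      ≤ β * (exp (-scaledTail β x) * (exp (-x) - scaledTail β x)) := by gcongr
    _ = exp (-scaledTail β x) * (β * (exp (-x) - scaledTail β x)) := by ring
    _ ≤ _ := by gcongr; exact mul_exp_neg_sub_scaledTail_le hβ x

lemma mul_abs_one_sub_scaledTail_div_pow_sub_le (hβ : 0 < β) (hβn : β ≤ n)
    (hTn : scaledTail β x ≤ n) :
    β * |(1 - scaledTail β x / n) ^ (n - 1) - exp (-scaledTail β x)| ≤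
      exp (-scaledTail β x) * (3 * exp (-x) + exp (-x) ^ 2) := by
  have hn : 1 ≤ n := Nat.cast_pos.1 (hβ.trans_le hβn)
  have hT := scaledTail_nonneg β x
  calc β * |(1 - scaledTail β x / n) ^ (n - 1) - exp (-scaledTail β x)|
      ≤ n * (exp (-scaledTail β x) * (3 * scaledTail β x + scaledTail β x ^ 2) / n) := by
        gcongr
        exact abs_one_sub_div_pow_pred_sub_exp_neg_le hn hT hTn
    _ = exp (-scaledTail β x) * (3 * scaledTail β x + scaledTail β x ^ 2) := by field_simp
    _ ≤ _ := by gcongr <;> exact scaledTail_le_exp_neg hβ.le x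

lemma abs_scaledMaxPDF_sub_gumbelPDF_le (hβ : 0 ≤ β) (hTn : scaledTail β x ≤ n) :
    |scaledMaxPDF β n x - gumbelPDF x| ≤
      (exp (-x) - scaledPDF β x) * (1 - scaledTail β x / n) ^ (n - 1) +
      exp (-x) * |(1 - scaledTail β x / n) ^ (n - 1) - exp (-scaledTail β x)| +
      exp (-x) * (exp (-scaledTail β x) - exp (-exp (-x))) := by
  have hdensity : 0 ≤ exp (-x) - scaledPDF β x := sub_nonneg.2 (scaledPDF_le_exp_neg hβ x)
  have htail : 0 ≤ exp (-scaledTail β x) - exp (-exp (-x)) :=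
    sub_nonneg.2 (exp_le_exp.2 (neg_le_neg (scaledTail_le_exp_neg hβ x)))
  rw [scaledMaxPDF_sub_gumbelPDF]
  refine (abs_add_three _ _ _).trans_eq ?_
  rw [abs_neg, abs_of_nonneg (mul_nonneg hdensity (one_sub_div_pow_pred_nonneg hTn)), abs_mul,
    abs_exp, abs_of_nonneg (mul_nonneg (exp_pos _).le htail)]

lemma mul_abs_scaledMaxPDF_sub_gumbelPDF_le (hβ : 0 < β) (hβn : β ≤ n)
    (hTn : scaledTail β x ≤ n) :
    β * |scaledMaxPDF β n x - gumbelPDF x| ≤ exp (-x) * exp (-scaledTail β x) *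
      (3 * x ^ 2 / 2 + 3 * exp (-x) + exp (-x) ^ 2 + exp (-x) * (x ^ 2 + 2 * x + 2) / 2) := by
  have hn : 1 ≤ n := Nat.cast_pos.1 (hβ.trans_le hβn)
  have hpow_nonneg := one_sub_div_pow_pred_nonneg hTn
  have hpow_le := one_sub_div_pow_pred_le_three_mul hn hTn
  have hdensity := mul_exp_neg_sub_scaledPDF_le hβ x
  have hpow := mul_abs_one_sub_scaledTail_div_pow_sub_le hβ hβn hTn
  have htail := mul_exp_neg_scaledTail_sub_le hβ x
  calc β * |scaledMaxPDF β n x - gumbelPDF x|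
      ≤ β * (exp (-x) - scaledPDF β x) * (1 - scaledTail β x / n) ^ (n - 1) +
        exp (-x) * (β * |(1 - scaledTail β x / n) ^ (n - 1) - exp (-scaledTail β x)|) +
        exp (-x) * (β * (exp (-scaledTail β x) - exp (-exp (-x)))) := by
        linarith [mul_le_mul_of_nonneg_left (abs_scaledMaxPDF_sub_gumbelPDF_le hβ.le hTn) hβ.le]
    _ ≤ exp (-x) * x ^ 2 / 2 * (3 * exp (-scaledTail β x)) +
        exp (-x) * (exp (-scaledTail β x) * (3 * exp (-x) + exp (-x) ^ 2)) +
        exp (-x) * (exp (-scaledTail β x) * (exp (-x) * (x ^ 2 + 2 * x + 2) / 2)) := by gcongr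
    _ = _ := by ring

lemma mul_abs_scaledMaxPDF_sub_gumbelPDF_le_of_nonneg (hβ : 0 < β) (hβn : β ≤ n)
    (hTn : scaledTail β x ≤ n) (hx : 0 ≤ x) :
    β * |scaledMaxPDF β n x - gumbelPDF x| ≤ 16 * exp (-x / 2) := by
  have hexp_le : exp (-x) ≤ 1 := exp_le_one_iff.2 (neg_nonpos.2 hx)
  have htail_le : exp (-scaledTail β x) ≤ 1 :=
    exp_le_one_iff.2 (neg_nonpos.2 (scaledTail_nonneg β x))
  have hquad : 2 * x ^ 2 + x + 5 ≤ 16 * exp (x / 2) := by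
    nlinarith [quadratic_le_exp_of_nonneg (x := x / 2) (by positivity)]
  calc β * |scaledMaxPDF β n x - gumbelPDF x|
      ≤ _ := mul_abs_scaledMaxPDF_sub_gumbelPDF_le hβ hβn hTn
    _ ≤ exp (-x) * 1 *
        (3 * x ^ 2 / 2 + 3 * 1 + 1 ^ 2 + 1 * (x ^ 2 + 2 * x + 2) / 2) := by gcongr
    _ = exp (-x) * (2 * x ^ 2 + x + 5) := by ring
    _ ≤ exp (-x) * (16 * exp (x / 2)) := by gcongr
    _ = 16 * exp (-x / 2) := by rw [mul_left_comm, ← exp_add]; ring_nf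

lemma mul_abs_scaledMaxPDF_sub_gumbelPDF_le_of_nonpos (hβ : 0 < β) (hβn : β ≤ n)
    (hTn : scaledTail β x ≤ n) (hx : x ≤ 0) (hxβ : -4 * β ≤ x) :
    β * |scaledMaxPDF β n x - gumbelPDF x| ≤ 8 * exp 169 * exp (x / 2) := by
  have hbracket : 3 * x ^ 2 / 2 + 3 * exp (-x) + exp (-x) ^ 2 +
      exp (-x) * (x ^ 2 + 2 * x + 2) / 2 ≤ 8 * exp (-x) ^ 2 := by
    have hquad := quadratic_le_exp_of_nonneg (neg_nonneg.2 hx)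
    nlinarith [one_le_exp (neg_nonneg.2 hx)]
  -- With `s = -x`, the exponent `3 s - s / 4 - s ^ 2 / 64` is at most `169 - s / 2`, with
  -- equality at `s = 104`.
  have hexponent : -3 * x - scaledTail β x ≤ 169 + x / 2 := by
    nlinarith [quadratic_le_scaledTail hβ hx hxβ, sq_nonneg (x + 104)]
  calc β * |scaledMaxPDF β n x - gumbelPDF x|
      ≤ _ := mul_abs_scaledMaxPDF_sub_gumbelPDF_le hβ hβn hTn
    _ ≤ exp (-x) * exp (-scaledTail β x) * (8 * exp (-x) ^ 2) := by gcongr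
    _ = 8 * exp (-3 * x - scaledTail β x) := by
        rw [← exp_nat_mul, ← exp_add, mul_left_comm, ← exp_add]
        push_cast
        ring_nf
    _ ≤ 8 * exp (169 + x / 2) := by gcongr
    _ = 8 * exp 169 * exp (x / 2) := by rw [exp_add, mul_assoc]

lemma scaledMaxPDF_nonneg (hTn : scaledTail β x ≤ n) : 0 ≤ scaledMaxPDF β n x :=
  mul_nonneg (scaledPDF_pos β x).le (one_sub_div_pow_pred_nonneg hTn)

lemma scaledMaxPDF_le_scaledPDF (hTn : scaledTail β x ≤ n) :
    scaledMaxPDF β n x ≤ scaledPDF β x :=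
  mul_le_of_le_one_right (scaledPDF_pos β x).le <|
    pow_le_one₀ (sub_nonneg.2 (div_le_one_of_le₀ hTn n.cast_nonneg))
      (sub_le_self _ (div_nonneg (scaledTail_nonneg β x) n.cast_nonneg))

lemma scaledPDF_le_exp_of_le (hβ : 0 < β) (hxβ : x ≤ -4 * β) : scaledPDF β x ≤ exp x := by
  have hsq : -2 * x ≤ x ^ 2 / (2 * β) := by
    rw [le_div_iff₀ (by positivity)]
    nlinarith
  rw [scaledPDF, exp_le_exp]
  linarith

lemma gumbelPDF_le_exp_of_nonpos (hx : x ≤ 0) : gumbelPDF x ≤ exp x := by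
  rw [gumbelPDF, exp_le_exp]
  nlinarith [quadratic_le_exp_of_nonneg (neg_nonneg.2 hx), sq_nonneg (x + 1)]

lemma mul_abs_scaledMaxPDF_sub_gumbelPDF_le_of_le (hβ : 0 < β) (hTn : scaledTail β x ≤ n)
    (hxβ : x ≤ -4 * β) :
    β * |scaledMaxPDF β n x - gumbelPDF x| ≤ exp (x / 2) := by
  have hβ_le : β ≤ exp (-x / 2) := by linarith [add_one_le_exp (-x / 2)]
  have hmax_le : scaledMaxPDF β n x ≤ exp x :=
    (scaledMaxPDF_le_scaledPDF hTn).trans (scaledPDF_le_exp_of_le hβ hxβ)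
  have hdiff : |scaledMaxPDF β n x - gumbelPDF x| ≤ exp x :=
    abs_sub_le_of_nonneg_of_le (scaledMaxPDF_nonneg hTn) hmax_le (gumbelPDF_pos x).le
      (gumbelPDF_le_exp_of_nonpos (by linarith))
  calc β * |scaledMaxPDF β n x - gumbelPDF x| ≤ exp (-x / 2) * exp x := by gcongr
    _ = exp (x / 2) := by rw [← exp_add]; ring_nf

lemma mul_abs_scaledMaxPDF_sub_gumbelPDF_le_exp_abs (hβ : 0 < β) (hβn : β ≤ n)
    (hTn : scaledTail β x ≤ n) :
    β * |scaledMaxPDF β n x - gumbelPDF x| ≤ 8 * exp 169 * exp (-2⁻¹ * |x|) := by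
  have hconst := add_one_le_exp 169
  obtain hx | hx := le_total 0 x
  · calc β * |scaledMaxPDF β n x - gumbelPDF x|
        ≤ 16 * exp (-x / 2) := mul_abs_scaledMaxPDF_sub_gumbelPDF_le_of_nonneg hβ hβn hTn hx
      _ ≤ 8 * exp 169 * exp (-x / 2) := by gcongr; linarith
      _ = _ := by rw [abs_of_nonneg hx]; ring_nf
  · suffices β * |scaledMaxPDF β n x - gumbelPDF x| ≤ 8 * exp 169 * exp (x / 2) by
      rw [abs_of_nonpos hx]
      convert this using 3
      ring
    obtain hxβ | hxβ := le_total (-4 * β) x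
    · exact mul_abs_scaledMaxPDF_sub_gumbelPDF_le_of_nonpos hβ hβn hTn hx hxβ
    · exact (mul_abs_scaledMaxPDF_sub_gumbelPDF_le_of_le hβ hTn hxβ).trans
        (le_mul_of_one_le_left (exp_pos _).le (by linarith))

end Domination

section IntegralLimit

lemma continuous_gumbelPDF : Continuous gumbelPDF := by
  unfold gumbelPDF; fun_prop

lemma measurable_scaledMaxPDF {β : ℝ} (hβ : 0 ≤ β) (n : ℕ) : Measurable (scaledMaxPDF β n) :=
  (continuous_scaledPDF β).measurable.mul <|
    (((antitone_scaledTail hβ).measurable.div_const _).const_sub 1).pow_const _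

lemma tendsto_mul_integral_abs_scaledMaxPDF_sub_gumbelPDF [l.IsCountablyGenerated]
    {β : ι → ℝ} {n : ι → ℕ} (hβ : Tendsto β l atTop)
    (hβn : Tendsto (fun i ↦ β i / n i) l (𝓝 0)) (hn : ∀ᶠ i in l, 1 ≤ n i)
    (hTn : ∀ᶠ i in l, ∀ x, scaledTail (β i) x ≤ n i) :
    Tendsto (fun i ↦ β i * ∫ x, |scaledMaxPDF (β i) (n i) x - gumbelPDF x|) l
      (𝓝 ((∫ x, gumbelPDF x * |gumbelCorrection x|) / 2)) := by
  have hpos := hβ.eventually_gt_atTop 0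
  simp_rw [← integral_const_mul, ← integral_div]
  refine tendsto_integral_filter_of_dominated_convergence
    (fun x ↦ 8 * exp 169 * exp (-2⁻¹ * |x|)) ?_ ?_
    ((integrable_exp_neg_mul_abs (by norm_num)).const_mul _) (.of_forall fun x ↦ ?_)
  · filter_upwards [hpos] with i hi
    exact (((measurable_scaledMaxPDF hi.le (n i)).sub
      continuous_gumbelPDF.measurable).abs.const_mul (β i)).aestronglyMeasurable
  · filter_upwards [hpos, hn, hTn, hβn.eventually_le_const one_pos] with i hi hni hTi hβi
    refine .of_forall fun x ↦ ?_
    rw [norm_of_nonneg (by positivity)]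
    refine mul_abs_scaledMaxPDF_sub_gumbelPDF_le_exp_abs hi ?_ (hTi x)
    rwa [div_le_one (by positivity)] at hβi
  · have hlim := (tendsto_mul_scaledMaxPDF_sub_gumbelPDF hβ hβn hn (hTn.mono fun i h ↦ h x)).abs
    rw [abs_div, abs_mul, abs_of_pos (gumbelPDF_pos x), abs_two] at hlim
    refine hlim.congr' ?_
    filter_upwards [hpos] with i hi
    rw [abs_mul, abs_of_pos hi]

end IntegralLimit

section GumbelCorrection

lemma continuous_gumbelCorrection : Continuous gumbelCorrection := by
  unfold gumbelCorrection; fun_prop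

variable {x : ℝ}

lemma abs_gumbelCorrection_le (x : ℝ) :
    |gumbelCorrection x| ≤ x ^ 2 + exp (-x) * (x ^ 2 + 2 * x + 2) := by
  have hquad : 0 ≤ x ^ 2 + 2 * x + 2 := by nlinarith [sq_nonneg (x + 1)]
  refine (abs_add_le _ _).trans_eq ?_
  rw [abs_neg, abs_of_nonneg (sq_nonneg x), abs_of_nonneg (mul_nonneg (exp_pos _).le hquad)]

lemma gumbelPDF_mul_abs_gumbelCorrection_le_of_nonneg (hx : 0 ≤ x) :
    gumbelPDF x * |gumbelCorrection x| ≤ 16 * exp (-x / 2) := by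
  have hpdf : gumbelPDF x ≤ exp (-x) := by
    rw [gumbelPDF, exp_le_exp]
    exact sub_le_self _ (exp_pos _).le
  have hcorr : |gumbelCorrection x| ≤ 16 * exp (x / 2) := by
    have hexp : exp (-x) ≤ 1 := exp_le_one_iff.2 (neg_nonpos.2 hx)
    calc |gumbelCorrection x| ≤ x ^ 2 + 1 * (x ^ 2 + 2 * x + 2) := by
          refine (abs_gumbelCorrection_le x).trans ?_
          gcongr
      _ ≤ 16 * exp (x / 2) := by
          nlinarith [quadratic_le_exp_of_nonneg (x := x / 2) (by positivity)]
  calc gumbelPDF x * |gumbelCorrection x| ≤ exp (-x) * (16 * exp (x / 2)) := by gcongr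
    _ = 16 * exp (-x / 2) := by rw [mul_left_comm, ← exp_add]; ring_nf

lemma gumbelPDF_mul_abs_gumbelCorrection_le_of_nonpos (hx : x ≤ 0) :
    gumbelPDF x * |gumbelCorrection x| ≤ 4 * exp 3 * exp (x / 2) := by
  have hquad := quadratic_le_exp_of_nonneg (neg_nonneg.2 hx)
  have hcorr : |gumbelCorrection x| ≤ 4 * exp (-x) ^ 2 := by
    refine (abs_gumbelCorrection_le x).trans ?_
    nlinarith [one_le_exp (neg_nonneg.2 hx)]
  have hexponent : -3 * x - exp (-x) ≤ 3 + x / 2 := by nlinarith [sq_nonneg (x + 5 / 2)]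
  calc gumbelPDF x * |gumbelCorrection x|
      ≤ gumbelPDF x * (4 * exp (-x) ^ 2) := by
        gcongr
        exact (gumbelPDF_pos x).le
    _ = 4 * exp (-3 * x - exp (-x)) := by
        rw [gumbelPDF, ← exp_nat_mul, mul_left_comm, ← exp_add]
        push_cast
        ring_nf
    _ ≤ 4 * exp (3 + x / 2) := by gcongr
    _ = 4 * exp 3 * exp (x / 2) := by rw [exp_add, mul_assoc]

lemma integrable_gumbelPDF_mul_abs_gumbelCorrection :
    Integrable fun x ↦ gumbelPDF x * |gumbelCorrection x| := by
  refine ((integrable_exp_neg_mul_abs (c := 2⁻¹) (by norm_num)).const_mul (4 * exp 3)).mono'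
    (continuous_gumbelPDF.mul continuous_gumbelCorrection.abs).aestronglyMeasurable
    (.of_forall fun x ↦ ?_)
  rw [norm_of_nonneg (mul_nonneg (gumbelPDF_pos x).le (abs_nonneg _))]
  obtain hx | hx := le_total 0 x
  · calc gumbelPDF x * |gumbelCorrection x|
        ≤ 16 * exp (-x / 2) := gumbelPDF_mul_abs_gumbelCorrection_le_of_nonneg hx
      _ ≤ 4 * exp 3 * exp (-x / 2) := by gcongr; linarith [add_one_le_exp 3]
      _ = _ := by rw [abs_of_nonneg hx]; ring_nf
  · rw [abs_of_nonpos hx]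
    convert gumbelPDF_mul_abs_gumbelCorrection_le_of_nonpos hx using 3
    ring

lemma integral_gumbelPDF_mul_abs_gumbelCorrection_pos :
    0 < ∫ x, gumbelPDF x * |gumbelCorrection x| :=
  integral_pos_of_integrable_nonneg_nonzero (x := 0)
    (continuous_gumbelPDF.mul continuous_gumbelCorrection.abs)
    integrable_gumbelPDF_mul_abs_gumbelCorrection
    (fun x ↦ mul_nonneg (gumbelPDF_pos x).le (abs_nonneg _))
    (by simp [(gumbelPDF_pos 0).ne', gumbelCorrection])

end GumbelCorrection

section Norming

variable {β t : ι → ℝ}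

lemma tendsto_atTop_of_mul_exp_eq_sq (ht : Tendsto t l atTop)
    (h : ∀ᶠ i in l, 2 * π * β i * exp (β i) = t i ^ 2) : Tendsto β l atTop := by
  have hlog : Tendsto (fun i ↦ log (t i ^ 2 / (2 * π)) / 2) l atTop :=
    (tendsto_log_atTop.comp (((tendsto_pow_atTop two_ne_zero).comp ht).atTop_div_const
      two_pi_pos)).atTop_div_const two_pos
  refine tendsto_atTop_mono' l ?_ hlog
  filter_upwards [h, ht.eventually_gt_atTop 0] with i hi hti
  rw [div_le_iff₀ two_pos, log_le_iff_le_exp (by positivity), div_le_iff₀ two_pi_pos, ← hi]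
  calc 2 * π * β i * exp (β i) ≤ 2 * π * exp (β i) * exp (β i) := by
        gcongr
        linarith [add_one_le_exp (β i)]
    _ = exp (β i * 2) * (2 * π) := by rw [mul_two, exp_add]; ring

lemma tendsto_div_of_mul_exp_eq_sq (hβ : Tendsto β l atTop)
    (h : ∀ᶠ i in l, 2 * π * β i * exp (β i) = t i ^ 2) :
    Tendsto (fun i ↦ β i / t i) l (𝓝 0) := by
  have hsq : Tendsto (fun i ↦ (β i / t i) ^ 2) l (𝓝 0) := by
    have hexp := ((tendsto_pow_mul_exp_neg_atTop_nhds_zero 1).comp hβ).div_const (2 * π)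
    rw [zero_div] at hexp
    refine hexp.congr' ?_
    filter_upwards [h, hβ.eventually_gt_atTop 0] with i hi hβi
    rw [div_pow, ← hi, Function.comp_apply, exp_neg]
    field_simp
  rw [tendsto_zero_iff_abs_tendsto_zero]
  simpa [sqrt_sq_eq_abs, Function.comp_def] using hsq.sqrt

lemma tendsto_log_div_of_mul_exp_eq_sq (hβ : Tendsto β l atTop)
    (h : ∀ᶠ i in l, 2 * π * β i * exp (β i) = t i ^ 2) :
    Tendsto (fun i ↦ log (t i) / β i) l (𝓝 (1 / 2)) := by
  have hlog : Tendsto (fun i ↦ log (β i) / β i) l (𝓝 0) :=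
    isLittleO_log_id_atTop.tendsto_div_nhds_zero.comp hβ
  have hconst : Tendsto (fun i ↦ log (2 * π) / β i) l (𝓝 0) := hβ.const_div_atTop _
  have hsum := ((hconst.add hlog).add_const 1).div_const 2
  rw [add_zero, zero_add] at hsum
  refine hsum.congr' ?_
  filter_upwards [h, hβ.eventually_gt_atTop 0] with i hi hβi
  have hlog_eq : log (2 * π) + log (β i) + β i = 2 * log (t i) := by
    have := congr_arg log hi
    rwa [log_mul (by positivity) (exp_pos _).ne', log_mul two_pi_pos.ne' hβi.ne', log_exp,
      log_pow, Nat.cast_ofNat] at this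
  field_simp
  linarith

end Norming

end

/-- If `b_n > 0` solves `2π b_n² exp(b_n²) = n²` and `Y_n = b_n(X_{(n)} - b_n)`, whose
density is `f_n(x) = n b_n⁻¹ φ(b_n + x/b_n) Φ(b_n + x/b_n)^{n-1}`, then
`‖L(Y_n) - Λ‖_TV = (d₃/(4 log n)) (1 + o(1))` with
`d₃ = ∫ e^{-x - e^{-x}} |−x² + e^{-x}(x² + 2x + 2)| dx`. -/
theorem hall_tv (b : ℕ → ℝ)
    (hb : ∀ n : ℕ, 1 ≤ n → 0 < b n ∧
      2 * Real.pi * (b n) ^ 2 * Real.exp ((b n) ^ 2) = (n : ℝ) ^ 2) :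
    Tendsto (fun n : ℕ =>
        (∫ x : ℝ, |(n : ℝ) * (b n)⁻¹ * stdNormalPDF (b n + x / b n) *
            stdNormalCDF (b n + x / b n) ^ (n - 1) - gumbelPDF x|) /
          ((∫ x : ℝ, Real.exp (-x - Real.exp (-x)) *
              |-x ^ 2 + Real.exp (-x) * (x ^ 2 + 2 * x + 2)|) / (4 * Real.log n)))
      atTop (nhds 1) := by
  have h : ∀ᶠ n : ℕ in atTop, 2 * π * b n ^ 2 * exp (b n ^ 2) = (n : ℝ) ^ 2 :=
    (eventually_ge_atTop 1).mono fun n hn ↦ (hb n hn).2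
  have hβ := tendsto_atTop_of_mul_exp_eq_sq tendsto_natCast_atTop_atTop h
  have hβn := tendsto_div_of_mul_exp_eq_sq hβ h
  have hlog := tendsto_log_div_of_mul_exp_eq_sq hβ h
  have hnb (n : ℕ) (hn : 1 ≤ n) : n * stdNormalPDF (b n) = b n :=
    mul_stdNormalPDF_eq (hb n hn).1 n.cast_nonneg (hb n hn).2
  set d := ∫ x, gumbelPDF x * |gumbelCorrection x|
  have hd : 0 < d := integral_gumbelPDF_mul_abs_gumbelCorrection_pos
  have htv := tendsto_mul_integral_abs_scaledMaxPDF_sub_gumbelPDF hβ hβn (eventually_ge_atTop 1)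
    ((eventually_ge_atTop 1).mono fun n hn ↦ scaledTail_sq_le (hb n hn).1 (hnb n hn))
  have hratio := ((htv.mul hlog).mul_const 4).div_const d
  have hlim : d / 2 * (1 / 2) * 4 / d = 1 := by field_simp; norm_num
  rw [hlim] at hratio
  refine hratio.congr' ?_
  filter_upwards [eventually_ge_atTop 1] with n hn
  have hbn := (hb n hn).1
  simp_rw [mul_stdNormalPDF_mul_stdNormalCDF_pow hbn (hnb n hn)]
  change _ = _ / (d / _)
  field_simp
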